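/- Let D be a countable dense subset of ℝ^N. Let {ν̄_n}_{n≥1} and ν̄ be N-dimensional parametric b-measures on ℝ^N, each with common m-bounds and common Lipschitz l-bounds, such that for each j ≥ 1 the m-bounds {m_j^n}_{n≥1} ∪ {m_j} form an equicontinuous family (for every ε > 0 there is δ > 0 with m_j^n([s,t]) < ε and m_j([s,t]) < ε whenever 0 ≤ t−s < δ, for all n) and the l-bounds {l_j^n}_{n≥1} ∪ {l_j} form a bounded family (there is c_j > 0 with l_j^n([t,t+1]) ≤ c_j and l_j([t,t+1]) ≤ c_j for all t ∈ ℝ and n). Suppose that for each component i, (ν_n^i)_y(I) → (ν^i)_y(I) for every y ∈ D and every compact interval I with rational endpoints, and that y₀^n → y₀ in ℝ^N. Let y(·, ν̄_n, y₀^n) and y(·, ν̄, y₀) denote the solutions of y_i(t) = y_{0,i} + ∫_0^t dν^i_{y(s)} with the corresponding data, defined on their maximal intervals of existence. Then y(·, ν̄_n, y₀^n) → y(·, ν̄, y₀) as n → ∞, uniformly on every compact interval [a,b] contained in the maximal interval of existence of y(·, ν̄, y₀). -/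

import Mathlib

open MeasureTheory Set Filter Topology

/-- A (continuous real) b-measure: a set function on the bounded Borel subsets of `ℝ`
which vanishes on `∅`, is countably additive over countable pairwise disjoint families
of bounded Borel sets with bounded union, and vanishes on singletons. -/
structure IsBMeasure (μ : Set ℝ → ℝ) : Prop where
  empty : μ ∅ = 0
  countably_additive : ∀ A : ℕ → Set ℝ, (∀ n, MeasurableSet (A n)) →
    (∀ n, Bornology.IsBounded (A n)) → Pairwise (Function.onFun Disjoint A) →
    Bornology.IsBounded (⋃ n, A n) →
    HasSum (fun n => μ (A n)) (μ (⋃ n, A n))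
  singleton : ∀ t : ℝ, μ {t} = 0

/-- A locally finite atomless Borel measure on `ℝ`. -/
def GoodMeasure (m : Measure ℝ) : Prop :=
  IsLocallyFiniteMeasure m ∧ ∀ t : ℝ, m {t} = 0

/-- `P` is a finite Borel partition of `A`. -/
def IsBorelPartition (A : Set ℝ) {n : ℕ} (P : Fin n → Set ℝ) : Prop :=
  (∀ i, MeasurableSet (P i)) ∧ Pairwise (Function.onFun Disjoint P) ∧ (⋃ i, P i) = A

/-- `|μ| ≤ m` : total-variation bound of the set function `μ` by the measure `m`,
expressed through finite Borel partitions of bounded Borel sets. -/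
def TVLE (μ : Set ℝ → ℝ) (m : Measure ℝ) : Prop :=
  ∀ A : Set ℝ, Bornology.IsBounded A → MeasurableSet A →
    ∀ (n : ℕ) (P : Fin n → Set ℝ), IsBorelPartition A P →
      ∑ i, |μ (P i)| ≤ (m A).toReal

/-- Partition-sum bound `Σ |μ₁(Aᵢ) - μ₂(Aᵢ)| ≤ c · l(A)` for the difference of two
set functions, over finite Borel partitions of bounded Borel sets. -/
def DiffLE (μ₁ μ₂ : Set ℝ → ℝ) (c : ℝ) (l : Measure ℝ) : Prop :=
  ∀ A : Set ℝ, Bornology.IsBounded A → MeasurableSet A →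
    ∀ (n : ℕ) (P : Fin n → Set ℝ), IsBorelPartition A P →
      ∑ i, |μ₁ (P i) - μ₂ (P i)| ≤ c * (l A).toReal

variable {E : Type*} [NormedAddCommGroup E]

/-- `m` is an m-bound of `ν` on the closed ball of radius `j`. -/
def HasMBound (ν : E → Set ℝ → ℝ) (j : ℕ) (m : Measure ℝ) : Prop :=
  GoodMeasure m ∧ ∀ y : E, ‖y‖ ≤ (j : ℝ) → TVLE (ν y) m

/-- `l` is an l-bound of `ν` on the closed ball of radius `j`, for the modulus `ω`. -/
def HasLBound (ω : ℝ → ℝ) (ν : E → Set ℝ → ℝ) (j : ℕ) (l : Measure ℝ) : Prop :=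
  GoodMeasure l ∧ ∀ y₁ y₂ : E, ‖y₁‖ ≤ (j : ℝ) → ‖y₂‖ ≤ (j : ℝ) →
    DiffLE (ν y₁) (ν y₂) (ω ‖y₁ - y₂‖) l

/-- A non-decreasing family of moduli of continuity `{ω_j}`. -/
structure IsModulusFamily (ω : ℕ → ℝ → ℝ) : Prop where
  continuousOn : ∀ j, ContinuousOn (ω j) (Ici 0)
  monotoneOn : ∀ j, MonotoneOn (ω j) (Ici 0)
  map_zero : ∀ j, ω j 0 = 0
  nonneg : ∀ j x, 0 ≤ x → 0 ≤ ω j x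
  mono_index : ∀ j x, 0 ≤ x → ω j x ≤ ω (j + 1) x

/-- A parametric b-measure on `E` with respect to the family of moduli `ω`. -/
def IsParamBMeasure (ω : ℕ → ℝ → ℝ) (ν : E → Set ℝ → ℝ) : Prop :=
  (∀ y, IsBMeasure (ν y)) ∧
    ∀ j : ℕ, 1 ≤ j → ∃ m l : Measure ℝ, HasMBound ν j m ∧ HasLBound (ω j) ν j l

/-- A tagged partition of `[a,b]`. -/
structure TaggedPartition (a b : ℝ) where
  k : ℕ
  k_pos : 0 < k
  t : ℕ → ℝ
  tag : ℕ → ℝ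
  left : t 0 = a
  right : t k = b
  lt : ∀ i < k, t i < t (i + 1)
  tag_mem : ∀ i < k, tag i ∈ Set.Icc (t i) (t (i + 1))

/-- The mesh of the tagged partition is `< δ`. -/
def TaggedPartition.MeshLT {a b : ℝ} (P : TaggedPartition a b) (δ : ℝ) : Prop :=
  ∀ i < P.k, P.t (i + 1) - P.t i < δ

/-- The Riemann sum of the parametric b-measure `ν` along the curve `y` over the
tagged partition `P`. -/
def RiemannSum (ν : E → Set ℝ → ℝ) (y : ℝ → E) {a b : ℝ} (P : TaggedPartition a b) : ℝ :=
  ∑ i ∈ Finset.range P.k, ν (y (P.tag i)) (Set.Icc (P.t i) (P.t (i + 1)))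

/-- `L = ∫_a^b dν_{y(s)}` : `L` is the limit of the Riemann sums of `ν` along `y`
over tagged partitions of `[a,b]` as the mesh tends to `0`. -/
def IsCurveIntegral (ν : E → Set ℝ → ℝ) (y : ℝ → E) (a b : ℝ) (L : ℝ) : Prop :=
  ∀ ε > 0, ∃ δ > 0, ∀ P : TaggedPartition a b, P.MeshLT δ → |L - RiemannSum ν y P| < ε

/-- A suitable set of moduli of continuity `Θ = {θ_j^{[q₁,q₂]}}`. -/
structure IsSuitableModuli (Θ : ℕ → ℚ → ℚ → ℝ → ℝ) : Prop where
  continuousOn : ∀ (j : ℕ) (q₁ q₂ : ℚ), q₁ < q₂ → ContinuousOn (Θ j q₁ q₂) (Ici 0)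
  monotoneOn : ∀ (j : ℕ) (q₁ q₂ : ℚ), q₁ < q₂ → MonotoneOn (Θ j q₁ q₂) (Ici 0)
  map_zero : ∀ (j : ℕ) (q₁ q₂ : ℚ), q₁ < q₂ → Θ j q₁ q₂ 0 = 0
  nonneg : ∀ (j : ℕ) (q₁ q₂ : ℚ) (x : ℝ), q₁ < q₂ → 0 ≤ x → 0 ≤ Θ j q₁ q₂ x
  mono : ∀ (j₁ j₂ : ℕ) (q₁ q₂ p₁ p₂ : ℚ), j₁ ≤ j₂ → q₁ ≤ p₁ → p₁ < p₂ → p₂ ≤ q₂ →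
    ∀ x : ℝ, 0 ≤ x → Θ j₁ p₁ p₂ x ≤ Θ j₂ q₁ q₂ x

/-- The set `𝒦_j^I` of continuous functions `y : I → E`, `I = [q₁,q₂]`, bounded by `j`
and admitting `θ_j^I` as modulus of continuity. -/
def KSet (E : Type*) [NormedAddCommGroup E] (Θ : ℕ → ℚ → ℚ → ℝ → ℝ)
    (j : ℕ) (q₁ q₂ : ℚ) : Set (ℝ → E) :=
  {y | ContinuousOn y (Set.Icc (q₁ : ℝ) (q₂ : ℝ)) ∧
    (∀ t ∈ Set.Icc (q₁ : ℝ) (q₂ : ℝ), ‖y t‖ ≤ (j : ℝ)) ∧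
    ∀ t₁ ∈ Set.Icc (q₁ : ℝ) (q₂ : ℝ), ∀ t₂ ∈ Set.Icc (q₁ : ℝ) (q₂ : ℝ),
      ‖y t₁ - y t₂‖ ≤ Θ j q₁ q₂ |t₁ - t₂|}

/-- Convergence `ν_n → ν₀` in the topology `σ_Θ` : the integrals along curves of
`𝒦_j^I` converge uniformly, for every `j` and every compact interval `I` with
rational endpoints. -/
def SigmaThetaTendsto {E : Type*} [NormedAddCommGroup E] (Θ : ℕ → ℚ → ℚ → ℝ → ℝ)
    (ν : ℕ → E → Set ℝ → ℝ) (ν₀ : E → Set ℝ → ℝ) : Prop :=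
  ∀ (j : ℕ) (q₁ q₂ : ℚ), q₁ < q₂ → ∀ ε > 0, ∃ n₀ : ℕ, ∀ n ≥ n₀,
    ∀ y ∈ KSet E Θ j q₁ q₂, ∀ L L₀ : ℝ,
      IsCurveIntegral (ν n) y (q₁ : ℝ) (q₂ : ℝ) L →
      IsCurveIntegral ν₀ y (q₁ : ℝ) (q₂ : ℝ) L₀ → |L - L₀| < ε

/-- The time-translate `ν·t` of a parametric b-measure: `(ν·t)_y(A) = ν_y(A + t)`. -/
def BTranslate (ν : E → Set ℝ → ℝ) (t : ℝ) : E → Set ℝ → ℝ :=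
  fun y A => ν y ((fun s => s + t) '' A)

/-- The time-translate `m·t` of a Borel measure: `(m·t)(A) = m(A + t)`. -/
noncomputable def MTranslate (m : Measure ℝ) (t : ℝ) : Measure ℝ :=
  Measure.map (fun s => s - t) m

/-- An N-dimensional parametric b-measure on `E` with common m-bounds `m j` and
common Lipschitz l-bounds `l j`. -/
def IsNDimParamBMeasure {M : ℕ} (νbar : Fin M → E → Set ℝ → ℝ)
    (m l : ℕ → Measure ℝ) : Prop :=
  (∀ i y, IsBMeasure (νbar i y)) ∧
    ∀ j : ℕ, 1 ≤ j → GoodMeasure (m j) ∧ GoodMeasure (l j) ∧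
      (∀ i, ∀ y : E, ‖y‖ ≤ (j : ℝ) → TVLE (νbar i y) (m j)) ∧
      (∀ i, ∀ y₁ y₂ : E, ‖y₁‖ ≤ (j : ℝ) → ‖y₂‖ ≤ (j : ℝ) →
        DiffLE (νbar i y₁) (νbar i y₂) ‖y₁ - y₂‖ (l j))

/-- The oriented curve integral: `∫_b^a := -∫_a^b`. -/
def IsSignedCurveIntegral (ν : E → Set ℝ → ℝ) (y : ℝ → E) (a b : ℝ) (L : ℝ) : Prop :=
  (a ≤ b ∧ IsCurveIntegral ν y a b L) ∨ (b < a ∧ IsCurveIntegral ν y b a (-L))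

/-- `y` is a solution on `S` of the Cauchy problem `y' = ν̄_y`, `y(t₀) = y₀`, for the
N-dimensional parametric b-measure `ν̄`: componentwise,
`y_i(t) = y_{0,i} + ∫_{t₀}^t dν^i_{y(s)}`. -/
def IsSolutionOn {M : ℕ} (νbar : Fin M → EuclideanSpace ℝ (Fin M) → Set ℝ → ℝ)
    (t₀ : ℝ) (y₀ : EuclideanSpace ℝ (Fin M)) (S : Set ℝ)
    (y : ℝ → EuclideanSpace ℝ (Fin M)) : Prop :=
  t₀ ∈ S ∧ y t₀ = y₀ ∧ ContinuousOn y S ∧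
    ∀ t ∈ S, ∀ i : Fin M, IsSignedCurveIntegral (νbar i) y t₀ t (y t i - y₀ i)

/-- `y` is the maximal (noncontinuable) solution, defined on the open interval `S`:
every solution on an interval containing `t₀` is a restriction of `y`. -/
def IsMaximalSolution {M : ℕ} (νbar : Fin M → EuclideanSpace ℝ (Fin M) → Set ℝ → ℝ)
    (t₀ : ℝ) (y₀ : EuclideanSpace ℝ (Fin M)) (S : Set ℝ)
    (y : ℝ → EuclideanSpace ℝ (Fin M)) : Prop :=
  IsSolutionOn νbar t₀ y₀ S y ∧ IsOpen S ∧ S.OrdConnected ∧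
    ∀ S' : Set ℝ, S'.OrdConnected → ∀ z, IsSolutionOn νbar t₀ y₀ S' z →
      S' ⊆ S ∧ Set.EqOn z y S'


section Helpers17

lemma bm_add17 {μ : Set ℝ → ℝ} (hμ : IsBMeasure μ) {A B : Set ℝ}
    (hA : MeasurableSet A) (hB : MeasurableSet B) (bA : Bornology.IsBounded A)
    (bB : Bornology.IsBounded B) (hd : Disjoint A B) : μ (A ∪ B) = μ A + μ B := by
  let f : ℕ → Set ℝ := fun n => if n = 0 then A else if n = 1 then B else ∅
  have hU : (⋃ n, f n) = A ∪ B := by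
    ext x
    simp only [mem_iUnion, mem_union, f]
    constructor
    · rintro ⟨n, hn⟩
      split_ifs at hn
      · exact Or.inl hn
      · exact Or.inr hn
      · exact absurd hn (by simp)
    · rintro (h | h)
      · exact ⟨0, by simpa using h⟩
      · exact ⟨1, by simpa using h⟩
  have h1 := hμ.countably_additive f
    (by intro n; simp only [f]; split_ifs <;> simp [hA, hB])
    (by intro n; simp only [f]; split_ifs <;> simp [bA, bB])
    (by
      intro a b hab
      simp only [Function.onFun, f]
      split_ifs <;> first | (exfalso; omega) | simp [hd, hd.symm])
    (by rw [hU]; exact bA.union bB)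
  rw [hU] at h1
  have h2 : HasSum (fun n => μ (f n)) (∑ n ∈ Finset.range 2, μ (f n)) := by
    apply hasSum_sum_of_ne_finset_zero
    intro b hb
    have : 1 < b := by simpa using hb
    simp only [f]
    rw [if_neg (by omega), if_neg (by omega), hμ.empty]
  rw [h1.unique h2]
  simp [Finset.sum_range_succ, f]

lemma bm_Icc_add17 {μ : Set ℝ → ℝ} (hμ : IsBMeasure μ) {a b c : ℝ} (hab : a ≤ b) (hbc : b ≤ c) :
    μ (Icc a c) = μ (Icc a b) + μ (Icc b c) := by
  have e1 : Icc a c = Icc a b ∪ Ioc b c := (Icc_union_Ioc_eq_Icc hab hbc).symm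
  have e2 : Icc b c = {b} ∪ Ioc b c := by
    rw [← Icc_self b]; exact (Icc_union_Ioc_eq_Icc le_rfl hbc).symm
  have bIoc : Bornology.IsBounded (Ioc b c) := Metric.isBounded_Ioc b c
  rw [e1, e2, bm_add17 hμ measurableSet_Icc measurableSet_Ioc (Metric.isBounded_Icc a b) bIoc
    (by rw [Set.disjoint_left]; rintro x ⟨_, h⟩ ⟨h', _⟩; linarith),
    bm_add17 hμ (measurableSet_singleton b) measurableSet_Ioc Bornology.isBounded_singleton bIoc
    (by simp), hμ.singleton]
  ring

lemma good_lt_top17 {l : Measure ℝ} (h : GoodMeasure l) (a b : ℝ) : l (Icc a b) < ⊤ := by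
  have := h.1
  exact isCompact_Icc.measure_lt_top

lemma good_Icc_add17 {l : Measure ℝ} (h : GoodMeasure l) {a b c : ℝ} (hab : a ≤ b) (hbc : b ≤ c) :
    (l (Icc a c)).toReal = (l (Icc a b)).toReal + (l (Icc b c)).toReal := by
  have := h.1
  have : NullSingletonClass l := ⟨h.2⟩
  have e2 : l (Icc b c) = l (Ioc b c) := measure_congr Ioc_ae_eq_Icc.symm
  rw [← Icc_union_Ioc_eq_Icc hab hbc, measure_union
    (by rw [Set.disjoint_left]; rintro x ⟨_, h⟩ ⟨h', _⟩; linarith) measurableSet_Ioc, e2,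
    ENNReal.toReal_add (good_lt_top17 h a b).ne (e2 ▸ (good_lt_top17 h b c).ne)]

lemma good_self17 {l : Measure ℝ} (h : GoodMeasure l) (a : ℝ) : (l (Icc a a)).toReal = 0 := by
  rw [Icc_self, h.2]; rfl

lemma bm_self17 {μ : Set ℝ → ℝ} (h : IsBMeasure μ) (a : ℝ) : μ (Icc a a) = 0 := by
  rw [Icc_self, h.singleton]

lemma isBorelPartition_one17 {A : Set ℝ} (hA : MeasurableSet A) :
    IsBorelPartition A (fun _ : Fin 1 => A) := by
  refine ⟨fun _ => hA, ?_, by simp [iUnion_const]⟩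
  intro i j hij
  exact absurd (Subsingleton.elim i j) hij

lemma tvle_Icc17 {μ : Set ℝ → ℝ} {m : Measure ℝ} (h : TVLE μ m) (a b : ℝ) :
    |μ (Icc a b)| ≤ (m (Icc a b)).toReal := by
  simpa using h _ (Metric.isBounded_Icc a b) measurableSet_Icc 1 _
    (isBorelPartition_one17 measurableSet_Icc)

lemma diffle_Icc17 {μ₁ μ₂ : Set ℝ → ℝ} {c : ℝ} {m : Measure ℝ} (h : DiffLE μ₁ μ₂ c m) (a b : ℝ) :
    |μ₁ (Icc a b) - μ₂ (Icc a b)| ≤ c * (m (Icc a b)).toReal := by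
  simpa using h _ (Metric.isBounded_Icc a b) measurableSet_Icc 1 _
    (isBorelPartition_one17 measurableSet_Icc)

namespace TaggedPartition

lemma mono17 {a b : ℝ} (P : TaggedPartition a b) {i j : ℕ} (hij : i ≤ j) (hj : j ≤ P.k) :
    P.t i ≤ P.t j := by
  induction j, hij using Nat.le_induction with
  | base => exact le_rfl
  | succ n hn ih => exact (ih (by omega)).trans (P.lt n (by omega)).le

lemma mem17 {a b : ℝ} (P : TaggedPartition a b) {i : ℕ} (hi : i ≤ P.k) : P.t i ∈ Icc a b := by
  have h1 := P.mono17 (Nat.zero_le i) hi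
  have h2 := P.mono17 hi le_rfl
  rw [P.left] at h1
  rw [P.right] at h2
  exact ⟨h1, h2⟩

lemma sum_additive17 {a b : ℝ} (P : TaggedPartition a b) (g : ℝ → ℝ → ℝ)
    (h0 : ∀ s, g s s = 0) (hg : ∀ s t r, s ≤ t → t ≤ r → g s r = g s t + g t r) :
    ∑ i ∈ Finset.range P.k, g (P.t i) (P.t (i + 1)) = g a b := by
  have key : ∀ n, n ≤ P.k → ∑ i ∈ Finset.range n, g (P.t i) (P.t (i + 1)) = g a (P.t n) := by
    intro n
    induction n with
    | zero => intro _; simp [P.left, h0]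
    | succ n ih =>
      intro hn
      rw [Finset.sum_range_succ, ih (by omega)]
      exact (hg _ _ _ (P.mem17 (by omega)).1 (P.lt n (by omega)).le).symm
  rw [key P.k le_rfl, P.right]

/-- The uniform partition. -/
lemma exists_mesh17 {a b : ℝ} (hab : a < b) {δ : ℝ} (hδ : 0 < δ) :
    ∃ P : TaggedPartition a b, P.MeshLT δ := by
  obtain ⟨k, hk⟩ := exists_nat_gt ((b - a) / δ)
  have hk0 : (0 : ℝ) < k := lt_of_le_of_lt (div_nonneg (by linarith) hδ.le) hk
  have hs : 0 < (b - a) / k := div_pos (by linarith) hk0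
  refine ⟨⟨k, by exact_mod_cast hk0, fun i => a + i * ((b - a) / k), fun i => a + i * ((b - a) / k),
    by simp, ?_, ?_, ?_⟩, ?_⟩
  · field_simp; ring
  · intro i _
    push_cast
    nlinarith
  · intro i _
    refine ⟨le_rfl, ?_⟩
    push_cast
    nlinarith
  · intro i _
    simp only
    push_cast
    have : (b - a) / k < δ := by
      rw [div_lt_iff₀ hk0]; rw [div_lt_iff₀ hδ] at hk; linarith
    linarith

/-- Concatenation. -/
def concat17 {a b c : ℝ} (P : TaggedPartition a b) (Q : TaggedPartition b c) :
    TaggedPartition a c where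
  k := P.k + Q.k
  k_pos := by have := P.k_pos; omega
  t i := if i < P.k then P.t i else Q.t (i - P.k)
  tag i := if i < P.k then P.tag i else Q.tag (i - P.k)
  left := by simp [P.k_pos, P.left]
  right := by simp [Q.right]
  lt := by
    intro i hi
    by_cases h : i < P.k
    · by_cases h' : i + 1 < P.k
      · simpa [h, h'] using P.lt i h
      · have e : i + 1 = P.k := by omega
        have := P.lt i h
        rw [e, P.right] at this
        simpa [h, e, Q.left] using this
    · have h' : ¬ i + 1 < P.k := by omega
      have := Q.lt (i - P.k) (by omega)
      rw [show i - P.k + 1 = i + 1 - P.k by omega] at this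
      simpa [h, h'] using this
  tag_mem := by
    intro i hi
    by_cases h : i < P.k
    · by_cases h' : i + 1 < P.k
      · simpa [h, h'] using P.tag_mem i h
      · have e : i + 1 = P.k := by omega
        have := P.tag_mem i h
        rw [e, P.right] at this
        simpa [h, e, Q.left] using this
    · have h' : ¬ i + 1 < P.k := by omega
      have := Q.tag_mem (i - P.k) (by omega)
      rw [show i - P.k + 1 = i + 1 - P.k by omega] at this
      simpa [h, h'] using this

lemma concat_t_left17 {a b c : ℝ} (P : TaggedPartition a b) (Q : TaggedPartition b c) {i : ℕ}
    (hi : i ≤ P.k) : (P.concat17 Q).t i = P.t i := by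
  rcases hi.lt_or_eq with h | h
  · simp [concat17, h]
  · subst h; simp [concat17, Q.left, P.right]

lemma concat_t_right17 {a b c : ℝ} (P : TaggedPartition a b) (Q : TaggedPartition b c) (i : ℕ) :
    (P.concat17 Q).t (P.k + i) = Q.t i := by
  simp [concat17]

lemma concat_mesh17 {a b c δ : ℝ} (P : TaggedPartition a b) (Q : TaggedPartition b c)
    (hP : P.MeshLT δ) (hQ : Q.MeshLT δ) : (P.concat17 Q).MeshLT δ := by
  intro i hi
  have hi : i < P.k + Q.k := hi
  by_cases h : i < P.k
  · rw [concat_t_left17 _ _ h.le, concat_t_left17 _ _ (by omega)]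
    exact hP i h
  · obtain ⟨r, rfl⟩ := Nat.exists_eq_add_of_le (not_lt.mp h)
    rw [add_assoc, concat_t_right17, concat_t_right17]
    exact hQ r (by omega)

end TaggedPartition

lemma riemannSum_concat17 {F : Type*} [NormedAddCommGroup F] (ν : F → Set ℝ → ℝ) (y : ℝ → F)
    {a b c : ℝ} (P : TaggedPartition a b) (Q : TaggedPartition b c) :
    RiemannSum ν y (P.concat17 Q) = RiemannSum ν y P + RiemannSum ν y Q := by
  unfold RiemannSum
  change ∑ i ∈ Finset.range (P.k + Q.k), _ = _
  rw [Finset.sum_range_add]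
  congr 1
  · apply Finset.sum_congr rfl
    intro i hi
    have hi := Finset.mem_range.mp hi
    rw [P.concat_t_left17 Q hi.le, P.concat_t_left17 Q hi]
    simp [TaggedPartition.concat17, hi]
  · apply Finset.sum_congr rfl
    intro i _
    rw [add_assoc, P.concat_t_right17, P.concat_t_right17]
    simp [TaggedPartition.concat17]

lemma norm_le17 {N : ℕ} (v : EuclideanSpace ℝ (Fin N)) {ρ : ℝ} (h : ∀ i, |v i| ≤ ρ) :
    ‖v‖ ≤ N * ρ := by
  have h1 : ‖v‖ ≤ ∑ i, |v i| := by
    rw [EuclideanSpace.norm_eq]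
    apply Real.sqrt_le_iff.mpr
    refine ⟨Finset.sum_nonneg fun i _ => abs_nonneg _, ?_⟩
    simp only [Real.norm_eq_abs]
    exact Finset.sum_sq_le_sq_sum_of_nonneg fun i _ => abs_nonneg _
  refine h1.trans ((Finset.sum_le_sum fun i _ => h i).trans ?_)
  simp

lemma approx17 {N : ℕ} {νbar : Fin N → EuclideanSpace ℝ (Fin N) → Set ℝ → ℝ}
    {y₀ : EuclideanSpace ℝ (Fin N)} {S : Set ℝ} {y : ℝ → EuclideanSpace ℝ (Fin N)}
    (sol : IsSolutionOn νbar 0 y₀ S y) {s t : ℝ} (hs0 : 0 ≤ s) (hst : s < t) (hs : s ∈ S)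
    (ht : t ∈ S) (i : Fin N) {ε : ℝ} (hε : 0 < ε) :
    ∃ P : TaggedPartition s t, |y t i - y s i - RiemannSum (νbar i) y P| < ε := by
  obtain ⟨_, hy0, _, hint⟩ := sol
  have It : IsCurveIntegral (νbar i) y 0 t (y t i - y₀ i) := by
    rcases hint t ht i with h | h
    · exact h.2
    · exact absurd h.1 (by linarith)
  have Is : IsCurveIntegral (νbar i) y 0 s (y s i - y₀ i) := by
    rcases hint s hs i with h | h
    · exact h.2
    · exact absurd h.1 (by linarith)
  obtain ⟨δ₁, hδ₁, H₁⟩ := It (ε / 2) (by positivity)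
  obtain ⟨δ₂, hδ₂, H₂⟩ := Is (ε / 2) (by positivity)
  have hδ : 0 < min δ₁ δ₂ := lt_min hδ₁ hδ₂
  rcases hs0.eq_or_lt with h0 | h0
  · subst h0
    obtain ⟨P, hP⟩ := TaggedPartition.exists_mesh17 hst hδ₁
    refine ⟨P, ?_⟩
    rw [hy0]
    exact (H₁ P hP).trans (by linarith)
  · obtain ⟨P, hP⟩ := TaggedPartition.exists_mesh17 hst hδ
    obtain ⟨Q, hQ⟩ := TaggedPartition.exists_mesh17 h0 hδ
    refine ⟨P, ?_⟩
    have a1 := H₁ (Q.concat17 P) (fun i hi =>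
      ((Q.concat_mesh17 P hQ hP) i hi).trans_le (min_le_left _ _))
    have a2 := H₂ Q (fun i hi => (hQ i hi).trans_le (min_le_right _ _))
    rw [riemannSum_concat17] at a1
    rw [abs_lt] at a1 a2 ⊢
    constructor <;> linarith

lemma estA17 {N : ℕ} {νbar : Fin N → EuclideanSpace ℝ (Fin N) → Set ℝ → ℝ}
    {m l : ℕ → Measure ℝ} (hν : IsNDimParamBMeasure νbar m l) {j : ℕ} (hj : 1 ≤ j)
    {y₀ : EuclideanSpace ℝ (Fin N)} {S : Set ℝ} {y : ℝ → EuclideanSpace ℝ (Fin N)}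
    (sol : IsSolutionOn νbar 0 y₀ S y) {s t : ℝ} (hs0 : 0 ≤ s) (hst : s ≤ t) (hs : s ∈ S)
    (ht : t ∈ S) (hb : ∀ u ∈ Icc s t, ‖y u‖ ≤ j) {d : EuclideanSpace ℝ (Fin N)} (hd : ‖d‖ ≤ j)
    {ρ : ℝ} (hρ : ∀ u ∈ Icc s t, ‖y u - d‖ ≤ ρ) (i : Fin N) :
    |y t i - y s i - νbar i d (Icc s t)| ≤ ρ * (l j (Icc s t)).toReal := by
  obtain ⟨hB, hν⟩ := hν
  obtain ⟨gm, gl, hm, hl⟩ := hν j hj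
  rcases hst.eq_or_lt with h | hst'
  · subst h
    rw [bm_self17 (hB i d), good_self17 gl]; simp
  apply le_of_forall_pos_le_add
  intro ε hε
  obtain ⟨P, hP⟩ := approx17 sol hs0 hst' hs ht i hε
  have e1 := P.sum_additive17 (fun a b => νbar i d (Icc a b)) (bm_self17 (hB i d))
    (fun a b c => bm_Icc_add17 (hB i d))
  have e2 := P.sum_additive17 (fun a b => (l j (Icc a b)).toReal) (good_self17 gl)
    (fun a b c => good_Icc_add17 gl)
  have key : |RiemannSum (νbar i) y P - νbar i d (Icc s t)| ≤ ρ * (l j (Icc s t)).toReal := by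
    rw [← e1, ← e2, RiemannSum, ← Finset.sum_sub_distrib, Finset.mul_sum]
    refine (Finset.abs_sum_le_sum_abs _ _).trans (Finset.sum_le_sum fun k hk => ?_)
    have hk := Finset.mem_range.mp hk
    have htag : P.tag k ∈ Icc s t :=
      Icc_subset_Icc (P.mem17 hk.le).1 (P.mem17 hk).2 (P.tag_mem k hk)
    refine (diffle_Icc17 (hl i _ d (hb _ htag) hd) _ _).trans ?_
    exact mul_le_mul_of_nonneg_right (hρ _ htag) ENNReal.toReal_nonneg
  calc |y t i - y s i - νbar i d (Icc s t)|
      = |(y t i - y s i - RiemannSum (νbar i) y P) + (RiemannSum (νbar i) y P - νbar i d (Icc s t))|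
        := by congr 1; ring
    _ ≤ _ := abs_add_le _ _
    _ ≤ _ := by linarith

lemma estM17 {N : ℕ} {νbar : Fin N → EuclideanSpace ℝ (Fin N) → Set ℝ → ℝ}
    {m l : ℕ → Measure ℝ} (hν : IsNDimParamBMeasure νbar m l) {j : ℕ} (hj : 1 ≤ j)
    {y₀ : EuclideanSpace ℝ (Fin N)} {S : Set ℝ} {y : ℝ → EuclideanSpace ℝ (Fin N)}
    (sol : IsSolutionOn νbar 0 y₀ S y) {s t : ℝ} (hs0 : 0 ≤ s) (hst : s ≤ t) (hs : s ∈ S)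
    (ht : t ∈ S) (hb : ∀ u ∈ Icc s t, ‖y u‖ ≤ j) (i : Fin N) :
    |y t i - y s i| ≤ (m j (Icc s t)).toReal := by
  obtain ⟨hB, hν⟩ := hν
  obtain ⟨gm, gl, hm, hl⟩ := hν j hj
  rcases hst.eq_or_lt with h | hst'
  · subst h
    simp
  apply le_of_forall_pos_le_add
  intro ε hε
  obtain ⟨P, hP⟩ := approx17 sol hs0 hst' hs ht i hε
  have e2 := P.sum_additive17 (fun a b => (m j (Icc a b)).toReal) (good_self17 gm)
    (fun a b c => good_Icc_add17 gm)
  have key : |RiemannSum (νbar i) y P| ≤ (m j (Icc s t)).toReal := by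
    rw [← e2, RiemannSum]
    refine (Finset.abs_sum_le_sum_abs _ _).trans (Finset.sum_le_sum fun k hk => ?_)
    have hk := Finset.mem_range.mp hk
    have htag : P.tag k ∈ Icc s t :=
      Icc_subset_Icc (P.mem17 hk.le).1 (P.mem17 hk).2 (P.tag_mem k hk)
    exact tvle_Icc17 (hm i _ (hb _ htag)) _ _
  calc |y t i - y s i|
      = |(y t i - y s i - RiemannSum (νbar i) y P) + RiemannSum (νbar i) y P|
        := by congr 1; ring
    _ ≤ _ := abs_add_le _ _
    _ ≤ _ := by linarith

lemma normM17 {N : ℕ} {νbar : Fin N → EuclideanSpace ℝ (Fin N) → Set ℝ → ℝ}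
    {m l : ℕ → Measure ℝ} (hν : IsNDimParamBMeasure νbar m l) {j : ℕ} (hj : 1 ≤ j)
    {y₀ : EuclideanSpace ℝ (Fin N)} {S : Set ℝ} {y : ℝ → EuclideanSpace ℝ (Fin N)}
    (sol : IsSolutionOn νbar 0 y₀ S y) {s t : ℝ} (hs0 : 0 ≤ s) (hst : s ≤ t) (hs : s ∈ S)
    (ht : t ∈ S) (hb : ∀ u ∈ Icc s t, ‖y u‖ ≤ j) {σ : ℝ} (hσ : 0 < σ)
    (hm : m j (Icc s t) < ENNReal.ofReal σ) :
    ‖y t - y s‖ ≤ N * σ := by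
  apply norm_le17
  intro i
  have h1 := estM17 hν hj sol hs0 hst hs ht hb i
  have h2 : (m j (Icc s t)).toReal ≤ σ := ENNReal.toReal_le_of_le_ofReal hσ.le hm.le
  simpa using h1.trans h2

/-- Local estimates imply the integral equation. -/
lemma lemB17 {N : ℕ} {ν : EuclideanSpace ℝ (Fin N) → Set ℝ → ℝ} {l : Measure ℝ}
    (gl : GoodMeasure l) {z : ℝ → EuclideanSpace ℝ (Fin N)} {f : ℝ → ℝ} {β : ℝ}
    (hz : ContinuousOn z (Icc 0 β))
    (h : ∀ s t, 0 ≤ s → s ≤ t → t ≤ β → ∀ τ ∈ Icc s t, ∀ ρ, (∀ u ∈ Icc s t, ‖z u - z τ‖ ≤ ρ) →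
      |f t - f s - ν (z τ) (Icc s t)| ≤ ρ * (l (Icc s t)).toReal) :
    IsCurveIntegral ν z 0 β (f β - f 0) := by
  intro ε hε
  set C := (l (Icc 0 β)).toReal with hC
  have hC0 : 0 ≤ C := ENNReal.toReal_nonneg
  have huc := isCompact_Icc.uniformContinuousOn_of_continuous hz
  rw [Metric.uniformContinuousOn_iff] at huc
  obtain ⟨δ, hδ, H⟩ := huc (ε / (C + 1)) (by positivity)
  refine ⟨δ, hδ, fun P hP => ?_⟩
  have e1 := P.sum_additive17 (fun a b => f b - f a) (by simp) (by intros; ring)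
  have e2 := P.sum_additive17 (fun a b => (l (Icc a b)).toReal) (good_self17 gl)
    (fun a b c => good_Icc_add17 gl)
  have key : |f β - f 0 - RiemannSum ν z P| ≤ ε / (C + 1) * C := by
    rw [hC, ← e2, ← e1, RiemannSum, ← Finset.sum_sub_distrib, Finset.mul_sum, e2]
    refine (Finset.abs_sum_le_sum_abs _ _).trans (Finset.sum_le_sum fun k hk => ?_)
    have hk := Finset.mem_range.mp hk
    have hsub : Icc (P.t k) (P.t (k + 1)) ⊆ Icc 0 β :=
      Icc_subset_Icc (P.mem17 hk.le).1 (P.mem17 hk).2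
    refine h _ _ (P.mem17 hk.le).1 (P.lt k hk).le (P.mem17 hk).2 _ (P.tag_mem k hk) _ ?_
    intro u hu
    have := H u (hsub hu) _ (hsub (P.tag_mem k hk)) (by
      rw [Real.dist_eq]
      have h1 := P.tag_mem k hk
      have h2 := hP k hk
      rw [abs_lt]
      constructor <;> linarith [hu.1, hu.2, h1.1, h1.2])
    rw [dist_eq_norm] at this
    exact this.le
  refine key.trans_lt ?_
  rw [div_mul_eq_mul_div, div_lt_iff₀ (by positivity)]
  nlinarith

/-- Bounded solutions on `[0,β)` extend to `β`. -/
lemma extend17 {N : ℕ} {νbar : Fin N → EuclideanSpace ℝ (Fin N) → Set ℝ → ℝ}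
    {m l : ℕ → Measure ℝ} (hν : IsNDimParamBMeasure νbar m l) {j : ℕ} (hj : 1 ≤ j)
    (hm : ∀ ε > (0 : ℝ), ∃ δ > (0 : ℝ), ∀ s t : ℝ, 0 ≤ t - s → t - s < δ →
      m j (Icc s t) < ENNReal.ofReal ε)
    {y₀ : EuclideanSpace ℝ (Fin N)} {S : Set ℝ} {y : ℝ → EuclideanSpace ℝ (Fin N)}
    (sol : IsMaximalSolution νbar 0 y₀ S y) {β : ℝ} (hβ : 0 < β) (hS : Ico 0 β ⊆ S)
    (hb : ∀ u ∈ Ico 0 β, ‖y u‖ ≤ j) : β ∈ S := by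
  by_contra hβS
  obtain ⟨sol, hopen, hoc, hmax⟩ := sol
  have gl := (hν.2 j hj).2.1
  have htv := (hν.2 j hj).2.2.1
  have hB := hν.1
  have hbs : ∀ {s t : ℝ}, 0 ≤ s → t < β → ∀ u ∈ Icc s t, ‖y u‖ ≤ j :=
    fun hs ht u hu => hb u ⟨hs.trans hu.1, hu.2.trans_lt ht⟩
  have hosc : ∀ ε > 0, ∃ δ > 0, ∀ s t, 0 ≤ s → s ≤ t → t < β → t - s < δ → ‖y t - y s‖ < ε := by
    intro ε hε
    obtain ⟨δ, hδ, H⟩ := hm (ε / (N + 1)) (by positivity)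
    refine ⟨δ, hδ, fun s t hs hst ht hd => ?_⟩
    have h1 := normM17 hν hj sol hs hst (hS ⟨hs, hst.trans_lt ht⟩) (hS ⟨hs.trans hst, ht⟩)
      (hbs hs ht) (σ := ε / (N + 1)) (by positivity) (H s t (by linarith) hd)
    refine h1.trans_lt ?_
    rw [mul_div_assoc', div_lt_iff₀ (by positivity)]
    nlinarith
  have hcau : Cauchy (Filter.map y (𝓝[<] β)) := by
    rw [Metric.cauchy_iff]
    refine ⟨inferInstance, fun ε hε => ?_⟩
    obtain ⟨δ, hδ, H⟩ := hosc ε hε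
    refine ⟨y '' Ioo (max 0 (β - δ)) β, image_mem_map (Ioo_mem_nhdsLT (by
      apply max_lt hβ; linarith)), ?_⟩
    rintro _ ⟨s, hs, rfl⟩ _ ⟨t, ht, rfl⟩
    have s1 := (le_max_left 0 (β - δ)).trans_lt hs.1
    have s2 := (le_max_right 0 (β - δ)).trans_lt hs.1
    have t1 := (le_max_left 0 (β - δ)).trans_lt ht.1
    have t2 := (le_max_right 0 (β - δ)).trans_lt ht.1
    rcases le_total s t with h | h
    · rw [dist_comm, dist_eq_norm]
      exact H s t s1.le h ht.2 (by linarith [ht.2])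
    · rw [dist_eq_norm]
      exact H t s t1.le h hs.2 (by linarith [hs.2])
  obtain ⟨v, hv⟩ := CompleteSpace.complete hcau
  have hv : Tendsto y (𝓝[<] β) (𝓝 v) := hv
  set z : ℝ → EuclideanSpace ℝ (Fin N) := Function.update y β v with hz
  have zb : z β = v := by simp [hz]
  have zl : ∀ t, t < β → z t = y t := fun t ht => by simp [hz, ht.ne]
  have zc : ContinuousOn z (Icc 0 β) := by
    have : ContinuousOn z (insert β (Ico 0 β)) := by
      rw [hz]
      intro t ht
      rcases eq_or_ne t β with h | h
      · subst h
        rw [continuousWithinAt_update_same]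
        refine hv.mono_left (nhdsWithin_mono _ ?_)
        rintro u ⟨hu1, hu2⟩
        rcases hu1 with h | h
        · exact absurd h hu2
        · exact h.2
      · have ht' : t ∈ Ico 0 β := ht.resolve_left h
        rw [continuousWithinAt_update_of_ne h]
        have := (sol.2.2.1 t (hS ht')).continuousAt (hopen.mem_nhds (hS ht'))
        exact this.continuousWithinAt
    rwa [Ico_insert_right hβ.le] at this
  have main : ∀ i, ∀ s t, 0 ≤ s → s ≤ t → t ≤ β → ∀ d, ‖d‖ ≤ j → ∀ ρ,
      (∀ u ∈ Icc s t, ‖z u - d‖ ≤ ρ) →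
      |z t i - z s i - νbar i d (Icc s t)| ≤ ρ * (l j (Icc s t)).toReal := by
    intro i
    have main1 : ∀ s t, 0 ≤ s → s ≤ t → t < β → ∀ d, ‖d‖ ≤ j → ∀ ρ,
      (∀ u ∈ Icc s t, ‖z u - d‖ ≤ ρ) →
      |z t i - z s i - νbar i d (Icc s t)| ≤ ρ * (l j (Icc s t)).toReal := by
      intro s t hs hst ht d hd ρ hρ
      rw [zl t ht, zl s (hst.trans_lt ht)]
      refine estA17 hν hj sol hs hst (hS ⟨hs, hst.trans_lt ht⟩) (hS ⟨hs.trans hst, ht⟩)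
        (hbs hs ht) hd ?_ i
      intro u hu
      rw [← zl u (hu.2.trans_lt ht)]
      exact hρ u hu
    intro s t hs hst ht d hd ρ hρ
    rcases ht.lt_or_eq with ht | ht
    · exact main1 s t hs hst ht d hd ρ hρ
    subst ht
    rcases hst.eq_or_lt with h | hst'
    · subst h
      rw [bm_self17 (hB i d), good_self17 gl]; simp
    apply le_of_forall_pos_le_add
    intro ε hε
    obtain ⟨δ, hδ, H⟩ := hm (ε / 2) (by positivity)
    have hv' : ∀ᶠ r in 𝓝[<] t, ‖y r - v‖ < ε / 2 := by
      have := Metric.tendsto_nhds.mp hv (ε / 2) (by positivity)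
      simpa [dist_eq_norm] using this
    have hr : ∀ᶠ r in 𝓝[<] t, r ∈ Ioo (max s (t - δ)) t :=
      Ioo_mem_nhdsLT (max_lt hst' (by linarith))
    obtain ⟨r, hr1, hr2⟩ := (hv'.and hr).exists
    have r1 := (le_max_left s (t - δ)).trans_lt hr2.1
    have r2 := (le_max_right s (t - δ)).trans_lt hr2.1
    have r3 := hr2.2
    have b1 := main1 s r hs r1.le r3 d hd ρ (fun u hu => hρ u ⟨hu.1, hu.2.trans r3.le⟩)
    have b2 : |νbar i d (Icc r t)| ≤ ε / 2 := (tvle_Icc17 (htv i d hd) r t).trans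
      (ENNReal.toReal_le_of_le_ofReal (by positivity) (H r t (by linarith) (by linarith)).le)
    have b3 : |y r i - v i| ≤ ε / 2 := by
      have := (PiLp.norm_apply_le (y r - v) i).trans hr1.le
      simpa using this
    have hρ0 : 0 ≤ ρ := (norm_nonneg _).trans (hρ t ⟨hst, le_rfl⟩)
    have b4 : ρ * (l j (Icc s r)).toReal ≤ ρ * (l j (Icc s t)).toReal := by
      rw [good_Icc_add17 gl r1.le r3.le]
      have : 0 ≤ (l j (Icc r t)).toReal := ENNReal.toReal_nonneg
      nlinarith
    rw [bm_Icc_add17 (hB i d) r1.le r3.le, zb]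
    rw [zl r r3] at b1
    rw [abs_le] at *
    constructor <;> linarith [b1.1, b1.2, b2.1, b2.2, b3.1, b3.2]
  have zbd : ∀ t ∈ Icc 0 β, ‖z t‖ ≤ j := by
    intro t ht
    rcases ht.2.lt_or_eq with h | h
    · rw [zl t h]; exact hb t ⟨ht.1, h⟩
    · rw [h, zb]
      refine le_of_tendsto hv.norm ?_
      filter_upwards [Ioo_mem_nhdsLT hβ] with r hr
      exact hb r ⟨hr.1.le, hr.2⟩
  have z0 : z 0 = y₀ := by rw [zl 0 hβ]; exact sol.2.1
  have solz : IsSolutionOn νbar 0 y₀ (Icc 0 β) z := by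
    refine ⟨⟨le_rfl, hβ.le⟩, z0, zc, fun t ht i => Or.inl ⟨ht.1, ?_⟩⟩
    rw [← z0]
    refine lemB17 (f := fun t => z t i) gl (zc.mono (Icc_subset_Icc le_rfl ht.2)) ?_
    intro s r hs hsr hr τ hτ ρ hρ
    exact main i s r hs hsr (hr.trans ht.2) (z τ)
      (zbd τ ⟨hs.trans hτ.1, hτ.2.trans (hr.trans ht.2)⟩) ρ hρ
  exact hβS ((hmax _ ordConnected_Icc z solz).1 ⟨hβ.le, le_rfl⟩)

lemma lbound17 {l : Measure ℝ} (gl : GoodMeasure l) {c : ℝ} (hc : 0 < c)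
    (h : ∀ t : ℝ, l (Icc t (t + 1)) ≤ ENNReal.ofReal c) (k : ℕ) :
    (l (Icc 0 (k : ℝ))).toReal ≤ k * c := by
  induction k with
  | zero => simp [gl.2]
  | succ k ih =>
    push_cast
    rw [good_Icc_add17 gl (b := (k : ℝ)) (by positivity) (by linarith)]
    have := ENNReal.toReal_le_of_le_ofReal hc.le (h k)
    linarith

/-- A priori estimate. -/
lemma apriori17 {N : ℕ}
    (D : Set (EuclideanSpace ℝ (Fin N))) (hDd : Dense D)
    (νn : ℕ → Fin N → EuclideanSpace ℝ (Fin N) → Set ℝ → ℝ)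
    (νbar : Fin N → EuclideanSpace ℝ (Fin N) → Set ℝ → ℝ)
    (mBn lBn : ℕ → ℕ → Measure ℝ) (mB lB : ℕ → Measure ℝ)
    (hνn : ∀ n, IsNDimParamBMeasure (νn n) (mBn n) (lBn n))
    (hν : IsNDimParamBMeasure νbar mB lB)
    (j : ℕ) (hj : 1 ≤ j)
    (hmeq : ∀ ε > (0 : ℝ), ∃ δ > (0 : ℝ), ∀ s t : ℝ,
      0 ≤ t - s → t - s < δ →
        (∀ n, mBn n j (Set.Icc s t) < ENNReal.ofReal ε) ∧
        mB j (Set.Icc s t) < ENNReal.ofReal ε)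
    (hlbd : ∃ c > (0 : ℝ), ∀ t : ℝ,
      (∀ n, lBn n j (Set.Icc t (t + 1)) ≤ ENNReal.ofReal c) ∧
      lB j (Set.Icc t (t + 1)) ≤ ENNReal.ofReal c)
    (hconv : ∀ i : Fin N, ∀ y ∈ D, ∀ q₁ q₂ : ℚ, q₁ < q₂ →
      Tendsto (fun n => νn n i y (Set.Icc (q₁ : ℝ) (q₂ : ℝ))) atTop
        (𝓝 (νbar i y (Set.Icc (q₁ : ℝ) (q₂ : ℝ)))))
    (y₀n : ℕ → EuclideanSpace ℝ (Fin N)) (y₀ : EuclideanSpace ℝ (Fin N))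
    (hy₀ : Tendsto y₀n atTop (𝓝 y₀))
    (Sn : ℕ → Set ℝ) (yn : ℕ → ℝ → EuclideanSpace ℝ (Fin N))
    (hyn : ∀ n, IsSolutionOn (νn n) 0 (y₀n n) (Sn n) (yn n))
    (S : Set ℝ) (y : ℝ → EuclideanSpace ℝ (Fin N))
    (hy : IsSolutionOn νbar 0 y₀ S y)
    (T : ℝ) (hTS : Icc 0 T ⊆ S) (hyb : ∀ t ∈ Icc 0 T, ‖y t‖ + 1 ≤ j)
    (ε : ℝ) (hε : 0 < ε) :
    ∃ n₀ : ℕ, ∀ n ≥ n₀, ∀ τ, τ ≤ T → Icc 0 τ ⊆ Sn n → (∀ t ∈ Icc 0 τ, ‖yn n t‖ ≤ j) →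
      ∀ t ∈ Icc 0 τ, ‖yn n t - y t‖ < ε := by
  obtain ⟨c, hc, hl⟩ := hlbd
  obtain ⟨k₀, hk₀⟩ := exists_nat_ge T
  set C : ℝ := k₀ * c with hC
  have hC0 : 0 ≤ C := by positivity
  have gl := (hν.2 j hj).2.1
  have gln := fun n => ((hνn n).2 j hj).2.1
  have mono : ∀ {l : Measure ℝ}, GoodMeasure l → ∀ t, t ≤ T →
      (l (Icc 0 t)).toReal ≤ (l (Icc 0 (k₀ : ℝ))).toReal := by
    intro l g t ht
    exact ENNReal.toReal_mono (good_lt_top17 g _ _).ne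
      (measure_mono (Icc_subset_Icc le_rfl (ht.trans hk₀)))
  have hCl : ∀ t, t ≤ T → (lB j (Icc 0 t)).toReal ≤ C := fun t ht =>
    (mono gl t ht).trans (lbound17 gl hc (fun t => (hl t).2) k₀)
  have hCln : ∀ n t, t ≤ T → (lBn n j (Icc 0 t)).toReal ≤ C := fun n t ht =>
    (mono (gln n) t ht).trans (lbound17 (gln n) hc (fun t => (hl t).1 n) k₀)
  set M : ℝ := Real.exp (N * C) * (1 + (N + 1) + N * (1 + (N + 1) * C)) with hM
  have hM0 : 0 < M := by positivity
  -- the small parameter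
  obtain ⟨σ, hσ, hσ1, hσM⟩ : ∃ σ > (0 : ℝ), σ ≤ 1 ∧ σ * (M + 2 * N) < ε := by
    refine ⟨min 1 (ε / (M + 2 * N + 1)), by positivity, min_le_left _ _, ?_⟩
    have h1 : min 1 (ε / (M + 2 * N + 1)) ≤ ε / (M + 2 * N + 1) := min_le_right _ _
    have h2 : ε / (M + 2 * N + 1) * (M + 2 * N) < ε := by
      rw [div_mul_eq_mul_div, div_lt_iff₀ (by positivity)]
      nlinarith
    exact (mul_le_mul_of_nonneg_right h1 (by positivity)).trans_lt h2
  obtain ⟨δ, hδ, hδm⟩ := hmeq σ hσ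
  obtain ⟨q, hq⟩ := exists_nat_one_div_lt hδ
  have hq0 : (0 : ℝ) < q + 1 := by positivity
  set g : ℕ → ℝ := fun k => k / ((q : ℝ) + 1) with hg
  have g0 : g 0 = 0 := by simp [hg]
  have gnn : ∀ k, 0 ≤ g k := fun k => by simp only [hg]; positivity
  have gstep : ∀ k, g (k + 1) = g k + 1 / ((q : ℝ) + 1) := by
    intro k; simp only [hg]; push_cast; ring
  have ginv : 0 < 1 / ((q : ℝ) + 1) := by positivity
  have hd : ∀ k, ∃ d ∈ D, ‖y (g k) - d‖ < σ := by
    intro k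
    obtain ⟨d, hdD, hd⟩ := hDd.exists_dist_lt (y (g k)) hσ
    exact ⟨d, hdD, by rwa [dist_eq_norm] at hd⟩
  choose d hdD hdσ using hd
  obtain ⟨K, hK⟩ := exists_nat_gt (T * (q + 1))
  have hK1 : (0 : ℝ) < K + 1 := by positivity
  have ev1 : ∀ᶠ n in atTop, ∀ k ∈ Finset.range K, ∀ i : Fin N,
      |νn n i (d k) (Icc (g k) (g (k + 1))) - νbar i (d k) (Icc (g k) (g (k + 1)))|
        ≤ σ / (K + 1) := by
    rw [Filter.eventually_all_finset]
    intro k _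
    rw [Filter.eventually_all]
    intro i
    have h1 := hconv i (d k) (hdD k) ((k : ℚ) / ((q : ℚ) + 1)) (((k : ℚ) + 1) / ((q : ℚ) + 1))
      (by apply div_lt_div_of_pos_right _ (by positivity); linarith)
    have e1 : (((k : ℚ) / ((q : ℚ) + 1) : ℚ) : ℝ) = g k := by simp [hg]
    have e2 : ((((k : ℚ) + 1) / ((q : ℚ) + 1) : ℚ) : ℝ) = g (k + 1) := by simp [hg]
    rw [e1, e2] at h1
    have h2 := Metric.tendsto_nhds.mp h1 (σ / (K + 1)) (by positivity)
    filter_upwards [h2] with n hn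
    rw [Real.dist_eq] at hn
    exact hn.le
  have ev2 : ∀ᶠ n in atTop, ‖y₀n n - y₀‖ ≤ σ := by
    have h2 := Metric.tendsto_nhds.mp hy₀ σ hσ
    filter_upwards [h2] with n hn
    rw [dist_eq_norm] at hn
    exact hn.le
  obtain ⟨n₀, hn₀⟩ := eventually_atTop.mp (ev1.and ev2)
  refine ⟨n₀, fun n hn τ hτ hSn hbn => ?_⟩
  obtain ⟨H1, H2⟩ := hn₀ n hn
  have osc : ∀ s t, 0 ≤ s → s ≤ t → t ≤ τ → t - s < δ →
      ‖yn n t - yn n s‖ ≤ N * σ ∧ ‖y t - y s‖ ≤ N * σ := by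
    intro s t hs hst ht hδ
    have hms := hδm s t (by linarith) hδ
    constructor
    · exact normM17 (hνn n) hj (hyn n) hs hst (hSn ⟨hs, hst.trans ht⟩) (hSn ⟨hs.trans hst, ht⟩)
        (fun u hu => hbn u ⟨hs.trans hu.1, hu.2.trans ht⟩) hσ (hms.1 n)
    · refine normM17 hν hj hy hs hst (hTS ⟨hs, (hst.trans ht).trans hτ⟩)
        (hTS ⟨hs.trans hst, ht.trans hτ⟩) (fun u hu => ?_) hσ hms.2
      linarith [hyb u ⟨hs.trans hu.1, (hu.2.trans ht).trans hτ⟩]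
  have gron : ∀ k : ℕ, k ≤ K → g k ≤ τ → ‖yn n (g k) - y (g k)‖ + (N + 1) * σ ≤
      Real.exp (N * (lBn n j (Icc 0 (g k))).toReal) *
        (σ + (N + 1) * σ + N * (k * (σ / (K + 1)) + (N + 1) * σ * (lB j (Icc 0 (g k))).toReal)) := by
    intro k
    induction k with
    | zero =>
      intro _ _
      rw [g0, (hyn n).2.1, hy.2.1, good_self17 gl, good_self17 (gln n)]
      simp
      exact H2
    | succ k ih =>
      intro hkK hgk
      have hgs := gstep k
      have hgk' : g k ≤ g (k + 1) := by linarith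
      have ih := ih (by omega) (by linarith)
      have hdk : ‖d k‖ ≤ j := by
        have h1 := hyb (g k) ⟨gnn k, by linarith⟩
        have h2 : ‖d k‖ ≤ ‖y (g k)‖ + ‖y (g k) - d k‖ := by
          have := norm_sub_le (y (g k)) (y (g k) - d k)
          simpa using this
        linarith [hdσ k]
      set w := ‖yn n (g k) - y (g k)‖ with hw
      have hw0 : 0 ≤ w := norm_nonneg _
      set ξn := (lBn n j (Icc (g k) (g (k + 1)))).toReal with hξn
      set ξb := (lB j (Icc (g k) (g (k + 1)))).toReal with hξb
      have hξn0 : 0 ≤ ξn := ENNReal.toReal_nonneg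
      have hξb0 : 0 ≤ ξb := ENNReal.toReal_nonneg
      have comp : ∀ i, |((yn n (g (k + 1)) - y (g (k + 1))) - (yn n (g k) - y (g k))) i| ≤
          (w + (N + 1) * σ) * ξn + σ / (K + 1) + (N + 1) * σ * ξb := by
        intro i
        have c1 := estA17 (hνn n) hj (hyn n) (gnn k) hgk' (hSn ⟨gnn k, by linarith⟩)
          (hSn ⟨gnn _, hgk⟩) (fun u hu => hbn u ⟨(gnn k).trans hu.1, hu.2.trans hgk⟩) hdk
          (ρ := w + (N + 1) * σ) (fun u hu => by
            have o := (osc (g k) u (gnn k) hu.1 (hu.2.trans hgk) (by linarith [hu.2])).1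
            have e : yn n u - d k = (yn n u - yn n (g k)) + (yn n (g k) - y (g k))
              + (y (g k) - d k) := by abel
            rw [e]
            refine (norm_add₃_le).trans ?_
            linarith [hdσ k]) i
        have c2 := estA17 hν hj hy (gnn k) hgk' (hTS ⟨gnn k, by linarith⟩)
          (hTS ⟨gnn _, hgk.trans hτ⟩) (fun u hu => by
            linarith [hyb u ⟨(gnn k).trans hu.1, (hu.2.trans hgk).trans hτ⟩]) hdk
          (ρ := (N + 1) * σ) (fun u hu => by
            have o := (osc (g k) u (gnn k) hu.1 (hu.2.trans hgk) (by linarith [hu.2])).2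
            have e : y u - d k = (y u - y (g k)) + (y (g k) - d k) := by abel
            rw [e]
            refine (norm_add_le _ _).trans ?_
            linarith [hdσ k]) i
        have c3 := H1 k (Finset.mem_range.mpr (by omega)) i
        rw [← hξn] at c1
        rw [← hξb] at c2
        simp only [PiLp.sub_apply]
        rw [abs_le] at *
        constructor <;> linarith [c1.1, c1.2, c2.1, c2.2, c3.1, c3.2]
      have step : ‖yn n (g (k + 1)) - y (g (k + 1))‖ ≤ w + N * ((w + (N + 1) * σ) * ξn
          + σ / (K + 1) + (N + 1) * σ * ξb) := by
        have h1 := norm_le17 _ comp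
        have h2 := norm_add_le ((yn n (g (k + 1)) - y (g (k + 1))) - (yn n (g k) - y (g k)))
          (yn n (g k) - y (g k))
        rw [sub_add_cancel] at h2
        linarith
      have a1 := good_Icc_add17 (gln n) (gnn k) hgk'
      have a2 := good_Icc_add17 gl (gnn k) hgk'
      rw [a1, a2, ← hξn, ← hξb]
      set A := (lBn n j (Icc 0 (g k))).toReal
      set B := (lB j (Icc 0 (g k))).toReal
      have hA0 : 0 ≤ A := ENNReal.toReal_nonneg
      have hexp : 1 + N * ξn ≤ Real.exp (N * ξn) := by
        have := Real.add_one_le_exp ((N : ℝ) * ξn); linarith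
      have hexp1 : 1 ≤ Real.exp (N * (A + ξn)) := Real.one_le_exp (by positivity)
      have hnn : 0 ≤ w + (N + 1) * σ := by positivity
      have hsplit : Real.exp (N * (A + ξn)) = Real.exp (N * ξn) * Real.exp (N * A) := by
        rw [← Real.exp_add]; ring_nf
      have p1 : (1 + N * ξn) * (w + (N + 1) * σ) ≤ Real.exp (N * ξn) * (Real.exp (N * A) *
          (σ + (N + 1) * σ + N * (k * (σ / (K + 1)) + (N + 1) * σ * B))) :=
        mul_le_mul hexp ih hnn (Real.exp_pos _).le
      have p2 : N * (σ / (K + 1) + (N + 1) * σ * ξb) ≤ Real.exp (N * (A + ξn)) *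
          (N * (σ / (K + 1) + (N + 1) * σ * ξb)) :=
        le_mul_of_one_le_left (by positivity) hexp1
      rw [← mul_assoc, ← hsplit] at p1
      push_cast
      calc _ ≤ (1 + N * ξn) * (w + (N + 1) * σ) + N * (σ / (K + 1) + (N + 1) * σ * ξb) := by
            linarith
        _ ≤ _ := add_le_add p1 p2
        _ = _ := by ring
  intro t ht
  set k := ⌊t * (q + 1)⌋₊ with hk
  have htq : 0 ≤ t * (q + 1) := mul_nonneg ht.1 hq0.le
  have k1 : g k ≤ t := by
    simp only [hg]
    rw [div_le_iff₀ hq0]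
    exact Nat.floor_le htq
  have k2 : t < g (k + 1) := by
    simp only [hg]
    rw [lt_div_iff₀ hq0]
    push_cast
    exact Nat.lt_floor_add_one _
  have k3 : k ≤ K := by
    have h1 : (k : ℝ) ≤ t * (q + 1) := Nat.floor_le htq
    have h2 : t * (q + 1) ≤ T * (q + 1) :=
      mul_le_mul_of_nonneg_right (ht.2.trans hτ) hq0.le
    exact_mod_cast (h1.trans (h2.trans hK.le))
  have G := gron k k3 (k1.trans ht.2)
  have hgT : g k ≤ T := k1.trans (ht.2.trans hτ)
  have G2 : Real.exp (N * (lBn n j (Icc 0 (g k))).toReal) *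
        (σ + (N + 1) * σ + N * (k * (σ / (K + 1)) + (N + 1) * σ * (lB j (Icc 0 (g k))).toReal))
        ≤ σ * M := by
    have x1 : Real.exp (N * (lBn n j (Icc 0 (g k))).toReal) ≤ Real.exp (N * C) :=
      Real.exp_le_exp.mpr (mul_le_mul_of_nonneg_left (hCln n _ hgT) (by positivity))
    have x2 : k * (σ / (K + 1)) ≤ σ := by
      rw [mul_div_assoc', div_le_iff₀ hK1]
      have : (k : ℝ) ≤ K := by exact_mod_cast k3
      nlinarith
    have x3 : (N + 1) * σ * (lB j (Icc 0 (g k))).toReal ≤ (N + 1) * σ * C :=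
      mul_le_mul_of_nonneg_left (hCl _ hgT) (by positivity)
    have x4 : σ + (N + 1) * σ + N * (k * (σ / (K + 1)) +
        (N + 1) * σ * (lB j (Icc 0 (g k))).toReal) ≤
        σ + (N + 1) * σ + N * (σ + (N + 1) * σ * C) := by gcongr
    calc _ ≤ Real.exp (N * C) * (σ + (N + 1) * σ + N * (σ + (N + 1) * σ * C)) :=
          mul_le_mul x1 x4 (by positivity) (Real.exp_pos _).le
      _ = σ * M := by rw [hM]; ring
  obtain ⟨o1, o2⟩ := osc (g k) t (gnn k) k1 ht.2 (by linarith [gstep k])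
  have e : yn n t - y t = (yn n t - yn n (g k)) + (yn n (g k) - y (g k)) + (y (g k) - y t) := by
    abel
  rw [norm_sub_rev] at o2
  have hN : 0 ≤ ((N : ℝ) + 1) * σ := by positivity
  rw [e]
  refine (norm_add₃_le).trans_lt ?_
  linarith

/-- Forward version. -/
lemma forward17 {N : ℕ}
    (D : Set (EuclideanSpace ℝ (Fin N))) (hDd : Dense D)
    (νn : ℕ → Fin N → EuclideanSpace ℝ (Fin N) → Set ℝ → ℝ)
    (νbar : Fin N → EuclideanSpace ℝ (Fin N) → Set ℝ → ℝ)
    (mBn lBn : ℕ → ℕ → Measure ℝ) (mB lB : ℕ → Measure ℝ)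
    (hνn : ∀ n, IsNDimParamBMeasure (νn n) (mBn n) (lBn n))
    (hν : IsNDimParamBMeasure νbar mB lB)
    (hmeq : ∀ j, 1 ≤ j → ∀ ε > (0 : ℝ), ∃ δ > (0 : ℝ), ∀ s t : ℝ,
      0 ≤ t - s → t - s < δ →
        (∀ n, mBn n j (Set.Icc s t) < ENNReal.ofReal ε) ∧
        mB j (Set.Icc s t) < ENNReal.ofReal ε)
    (hlbd : ∀ j, 1 ≤ j → ∃ c > (0 : ℝ), ∀ t : ℝ,
      (∀ n, lBn n j (Set.Icc t (t + 1)) ≤ ENNReal.ofReal c) ∧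
      lB j (Set.Icc t (t + 1)) ≤ ENNReal.ofReal c)
    (hconv : ∀ i : Fin N, ∀ y ∈ D, ∀ q₁ q₂ : ℚ, q₁ < q₂ →
      Tendsto (fun n => νn n i y (Set.Icc (q₁ : ℝ) (q₂ : ℝ))) atTop
        (𝓝 (νbar i y (Set.Icc (q₁ : ℝ) (q₂ : ℝ)))))
    (y₀n : ℕ → EuclideanSpace ℝ (Fin N)) (y₀ : EuclideanSpace ℝ (Fin N))
    (hy₀ : Tendsto y₀n atTop (𝓝 y₀))
    (Sn : ℕ → Set ℝ) (yn : ℕ → ℝ → EuclideanSpace ℝ (Fin N))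
    (hyn : ∀ n, IsMaximalSolution (νn n) 0 (y₀n n) (Sn n) (yn n))
    (S : Set ℝ) (y : ℝ → EuclideanSpace ℝ (Fin N))
    (hy : IsMaximalSolution νbar 0 y₀ S y) :
    ∀ T : ℝ, 0 ≤ T → Set.Icc 0 T ⊆ S → ∀ ε > (0 : ℝ), ∃ n₀ : ℕ, ∀ n ≥ n₀,
      Set.Icc 0 T ⊆ Sn n ∧ ∀ t ∈ Set.Icc 0 T, ‖yn n t - y t‖ < ε := by
  intro T hT hTS ε hε
  have hyc : ContinuousOn y (Icc 0 T) := hy.1.2.2.1.mono hTS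
  obtain ⟨R, hR⟩ := isCompact_Icc.exists_bound_of_continuousOn hyc
  obtain ⟨j, hjR⟩ := exists_nat_ge (R + 1)
  have hyb : ∀ t ∈ Icc 0 T, ‖y t‖ + 1 ≤ j := fun t ht => by linarith [hR t ht]
  have hj : 1 ≤ j := by
    have := hyb 0 ⟨le_rfl, hT⟩
    have h2 : (1 : ℝ) ≤ j := by linarith [norm_nonneg (y 0)]
    exact_mod_cast h2
  obtain ⟨n₀, hn₀⟩ := apriori17 D hDd νn νbar mBn lBn mB lB hνn hν j hj (hmeq j hj) (hlbd j hj)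
    hconv y₀n y₀ hy₀ Sn yn (fun n => (hyn n).1) S y hy.1 T hTS hyb (min ε (1 / 2)) (by positivity)
  obtain ⟨n₁, hn₁⟩ := eventually_atTop.mp (Metric.tendsto_nhds.mp hy₀ 1 one_pos)
  refine ⟨max n₀ n₁, fun n hn => ?_⟩
  have A := hn₀ n ((le_max_left _ _).trans hn)
  have B := hn₁ n ((le_max_right _ _).trans hn)
  obtain ⟨soln, opn, ocn, _⟩ := hyn n
  have bnd : ∀ t ∈ Icc 0 T, ‖yn n t - y t‖ ≤ 1 → ‖yn n t‖ ≤ j := by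
    intro t ht h
    have := norm_add_le (yn n t - y t) (y t)
    rw [sub_add_cancel] at this
    linarith [hyb t ht]
  have hsol0 : (0 : ℝ) ∈ Sn n := soln.1
  set G : Set ℝ := {τ | τ ∈ Icc 0 T ∧ Icc 0 τ ⊆ Sn n ∧ ∀ t ∈ Icc 0 τ, ‖yn n t - y t‖ ≤ 1} with hG
  have G0 : (0 : ℝ) ∈ G := by
    refine ⟨⟨le_rfl, hT⟩, ?_, ?_⟩
    · rw [Icc_self]; simpa using hsol0
    · intro t ht
      rw [Icc_self] at ht
      rw [mem_singleton_iff.mp ht, soln.2.1, hy.1.2.1, ← dist_eq_norm]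
      exact B.le
  have GT : ∀ τ ∈ G, ∀ t ∈ Icc 0 τ, ‖yn n t - y t‖ < min ε (1 / 2) := by
    rintro τ ⟨h1, h2, h3⟩
    exact A τ h1.2 h2 (fun t ht => bnd t ⟨ht.1, ht.2.trans h1.2⟩ (h3 t ht))
  have Gbdd : BddAbove G := ⟨T, fun τ h => h.1.2⟩
  set β := sSup G with hβ
  have hβ0 : 0 ≤ β := le_csSup Gbdd G0
  have hβT : β ≤ T := csSup_le ⟨0, G0⟩ (fun τ h => h.1.2)
  have Glt : ∀ t ∈ Ico 0 β, t ∈ Sn n ∧ ‖yn n t - y t‖ < min ε (1 / 2) := by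
    intro t ht
    obtain ⟨τ, hτ, htτ⟩ := exists_lt_of_lt_csSup ⟨0, G0⟩ ht.2
    exact ⟨hτ.2.1 ⟨ht.1, htτ.le⟩, GT τ hτ t ⟨ht.1, htτ.le⟩⟩
  have hmin : min ε (1 / 2) ≤ 1 := (min_le_right _ _).trans (by norm_num)
  have hβS : β ∈ Sn n := by
    rcases hβ0.eq_or_lt with h | h
    · rw [← h]; exact hsol0
    · refine extend17 (hνn n) hj ?_ (hyn n) h (fun t ht => (Glt t ht).1) ?_
      · intro ε hε
        obtain ⟨δ, hδ, H⟩ := hmeq j hj ε hε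
        exact ⟨δ, hδ, fun s t h1 h2 => (H s t h1 h2).1 n⟩
      · intro t ht
        exact bnd t ⟨ht.1, ht.2.le.trans hβT⟩ ((Glt t ht).2.le.trans hmin)
  have cn : ContinuousAt (yn n) β := (soln.2.2.1 β hβS).continuousAt (opn.mem_nhds hβS)
  have hβS' : β ∈ S := hTS ⟨hβ0, hβT⟩
  have cy : ContinuousAt y β := (hy.1.2.2.1 β hβS').continuousAt (hy.2.1.mem_nhds hβS')
  have cw : ContinuousAt (fun t => ‖yn n t - y t‖) β := (cn.sub cy).norm
  have Gβ : β ∈ G := by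
    refine ⟨⟨hβ0, hβT⟩, ocn.out hsol0 hβS, fun t ht => ?_⟩
    rcases ht.2.lt_or_eq with h | h
    · exact (Glt t ⟨ht.1, h⟩).2.le.trans hmin
    · subst h
      rcases ht.1.eq_or_lt with h0 | h0
      · rw [← h0]; exact G0.2.2 0 ⟨le_rfl, le_rfl⟩
      · refine le_of_tendsto (cw.tendsto.mono_left (nhdsWithin_le_nhds (s := Iio β))) ?_
        filter_upwards [Ioo_mem_nhdsLT h0] with r hr
        exact (Glt r ⟨hr.1.le, hr.2⟩).2.le.trans hmin
  have hwβ : ‖yn n β - y β‖ < 1 :=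
    (GT β Gβ β ⟨hβ0, le_rfl⟩).trans_le hmin
  have hβeq : β = T := by
    by_contra hne
    have hlt : β < T := lt_of_le_of_ne hβT hne
    have e1 : ∀ᶠ t in 𝓝 β, ‖yn n t - y t‖ < 1 := cw.eventually_lt continuousAt_const hwβ
    have e2 : ∀ᶠ t in 𝓝 β, t ∈ Sn n := opn.mem_nhds hβS
    obtain ⟨r, hr, H⟩ := Metric.eventually_nhds_iff.mp (e1.and e2)
    set τ := min T (β + r / 2) with hτ
    have t1 : β < τ := lt_min hlt (by linarith)
    have t2 : τ ≤ β + r / 2 := min_le_right _ _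
    have near : ∀ t, β ≤ t → t ≤ τ → ‖yn n t - y t‖ < 1 ∧ t ∈ Sn n := by
      intro t h1 h2
      apply H
      rw [Real.dist_eq, abs_lt]
      constructor <;> linarith
    have : τ ∈ G := by
      refine ⟨⟨hβ0.trans t1.le, min_le_left _ _⟩, ?_, ?_⟩
      · exact ocn.out hsol0 (near τ t1.le le_rfl).2
      · intro t ht
        rcases le_total t β with h | h
        · exact Gβ.2.2 t ⟨ht.1, h⟩
        · exact (near t h ht.2).1.le
    exact absurd (le_csSup Gbdd this) (not_le.mpr t1)
  rw [hβeq] at Gβ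
  exact ⟨Gβ.2.1, fun t ht => (GT T Gβ t ht).trans_le (min_le_left _ _)⟩

/-- Time reflection of a set function. -/
def refl17 (μ : Set ℝ → ℝ) : Set ℝ → ℝ := fun A => -μ (Neg.neg ⁻¹' A)

lemma preimage_bdd17 {A : Set ℝ} (h : Bornology.IsBounded A) :
    Bornology.IsBounded ((Neg.neg : ℝ → ℝ) ⁻¹' A) := by
  obtain ⟨r, hr⟩ := h.subset_closedBall 0
  refine (Metric.isBounded_closedBall (x := (0 : ℝ)) (r := r)).subset fun x hx => ?_
  have := hr hx
  simpa using this

lemma preimage_Icc17 (a b : ℝ) : (Neg.neg : ℝ → ℝ) ⁻¹' (Icc a b) = Icc (-b) (-a) := by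
  ext x
  simp only [mem_preimage, mem_Icc]
  constructor <;> rintro ⟨h1, h2⟩ <;> constructor <;> linarith

lemma preimage_preimage17 (A : Set ℝ) :
    (Neg.neg : ℝ → ℝ) ⁻¹' ((Neg.neg : ℝ → ℝ) ⁻¹' A) = A := by
  ext x; simp

lemma refl_refl17 (μ : Set ℝ → ℝ) : refl17 (refl17 μ) = μ := by
  funext A
  simp only [refl17, preimage_preimage17, neg_neg]

lemma refl_Icc17 (μ : Set ℝ → ℝ) (a b : ℝ) : refl17 μ (Icc a b) = -μ (Icc (-b) (-a)) := by
  rw [refl17, preimage_Icc17]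

lemma refl_bm17 {μ : Set ℝ → ℝ} (h : IsBMeasure μ) : IsBMeasure (refl17 μ) := by
  refine ⟨by simp [refl17, h.empty], fun A hA bA dA bU => ?_, fun t => ?_⟩
  · have := h.countably_additive (fun n => Neg.neg ⁻¹' A n) (fun n => measurable_neg (hA n))
      (fun n => preimage_bdd17 (bA n)) (fun i j hij => (dA hij).preimage _)
      (by rw [← preimage_iUnion]; exact preimage_bdd17 bU)
    rw [← preimage_iUnion] at this
    exact this.neg
  · rw [← Icc_self, refl_Icc17, Icc_self, h.singleton, neg_zero]

lemma refl_good17 {m : Measure ℝ} (h : GoodMeasure m) : GoodMeasure (m.map Neg.neg) := by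
  have := h.1
  refine ⟨⟨fun x => ⟨Icc (x - 1) (x + 1), Icc_mem_nhds (by linarith) (by linarith), ?_⟩⟩, fun t => ?_⟩
  · rw [Measure.map_apply measurable_neg measurableSet_Icc, preimage_Icc17]
    exact good_lt_top17 h _ _
  · rw [Measure.map_apply measurable_neg (measurableSet_singleton t), ← Icc_self, preimage_Icc17,
      Icc_self, h.2]

lemma refl_part17 {A : Set ℝ} {n : ℕ} {P : Fin n → Set ℝ} (h : IsBorelPartition A P) :
    IsBorelPartition ((Neg.neg : ℝ → ℝ) ⁻¹' A) (fun i => (Neg.neg : ℝ → ℝ) ⁻¹' P i) :=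
  ⟨fun i => measurable_neg (h.1 i), fun _ _ hij => (h.2.1 hij).preimage _,
    by rw [← preimage_iUnion, h.2.2]⟩

lemma refl_tvle17 {μ : Set ℝ → ℝ} {m : Measure ℝ} (h : TVLE μ m) :
    TVLE (refl17 μ) (m.map Neg.neg) := by
  intro A bA hA n P hP
  rw [Measure.map_apply measurable_neg hA]
  have := h _ (preimage_bdd17 bA) (measurable_neg hA) n _ (refl_part17 hP)
  simpa [refl17] using this

lemma refl_diffle17 {μ₁ μ₂ : Set ℝ → ℝ} {c : ℝ} {m : Measure ℝ} (h : DiffLE μ₁ μ₂ c m) :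
    DiffLE (refl17 μ₁) (refl17 μ₂) c (m.map Neg.neg) := by
  intro A bA hA n P hP
  rw [Measure.map_apply measurable_neg hA]
  have := h _ (preimage_bdd17 bA) (measurable_neg hA) n _ (refl_part17 hP)
  refine le_trans (le_of_eq ?_) this
  refine Finset.sum_congr rfl fun i _ => ?_
  simp only [refl17]
  rw [← abs_neg]
  congr 1
  ring

lemma refl_ndim17 {N : ℕ} {νbar : Fin N → EuclideanSpace ℝ (Fin N) → Set ℝ → ℝ}
    {m l : ℕ → Measure ℝ} (h : IsNDimParamBMeasure νbar m l) :
    IsNDimParamBMeasure (fun i y => refl17 (νbar i y)) (fun j => (m j).map Neg.neg)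
      (fun j => (l j).map Neg.neg) := by
  refine ⟨fun i y => refl_bm17 (h.1 i y), fun j hj => ?_⟩
  obtain ⟨a, b, c, d⟩ := h.2 j hj
  exact ⟨refl_good17 a, refl_good17 b, fun i y hy => refl_tvle17 (c i y hy),
    fun i y₁ y₂ h₁ h₂ => refl_diffle17 (d i y₁ y₂ h₁ h₂)⟩

/-- Reversed partition. -/
def TaggedPartition.rev17 {a b : ℝ} (P : TaggedPartition (-b) (-a)) : TaggedPartition a b where
  k := P.k
  k_pos := P.k_pos
  t i := -P.t (P.k - i)
  tag i := -P.tag (P.k - 1 - i)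
  left := by simp [P.right]
  right := by simp [P.left]
  lt := by
    intro i hi
    have := P.lt (P.k - (i + 1)) (by omega)
    rw [show P.k - (i + 1) + 1 = P.k - i by omega] at this
    linarith
  tag_mem := by
    intro i hi
    have := P.tag_mem (P.k - (i + 1)) (by omega)
    rw [show P.k - (i + 1) + 1 = P.k - i by omega] at this
    rw [show P.k - 1 - i = P.k - (i + 1) by omega]
    exact ⟨by linarith [this.2], by linarith [this.1]⟩

lemma refl_integral17 {F : Type*} [NormedAddCommGroup F] {ν : F → Set ℝ → ℝ} {y : ℝ → F}
    {a b L : ℝ} (h : IsCurveIntegral ν y a b L) :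
    IsCurveIntegral (fun v => refl17 (ν v)) (fun t => y (-t)) (-b) (-a) (-L) := by
  intro ε hε
  obtain ⟨δ, hδ, H⟩ := h ε hε
  refine ⟨δ, hδ, fun P hP => ?_⟩
  have hm : P.rev17.MeshLT δ := by
    intro i hi
    have hi : i < P.k := hi
    have := hP (P.k - (i + 1)) (by omega)
    rw [show P.k - (i + 1) + 1 = P.k - i by omega] at this
    change -P.t (P.k - (i + 1)) - -P.t (P.k - i) < δ
    linarith
  have e : RiemannSum (fun v => refl17 (ν v)) (fun t => y (-t)) P = -RiemannSum ν y P.rev17 := by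
    unfold RiemannSum
    rw [← Finset.sum_range_reflect, ← Finset.sum_neg_distrib]
    refine Finset.sum_congr rfl fun i hi => ?_
    have hi : i < P.k := Finset.mem_range.mp hi
    simp only [refl_Icc17]
    change -ν (y (-P.tag (P.k - 1 - i))) _ =
      -ν (y (-P.tag (P.k - 1 - i))) (Icc (-P.t (P.k - i)) (-P.t (P.k - (i + 1))))
    rw [show P.k - 1 - i + 1 = P.k - i by omega, show P.k - 1 - i = P.k - (i + 1) by omega]
  have := H P.rev17 hm
  rw [e, show -L - -RiemannSum ν y P.rev17 = -(L - RiemannSum ν y P.rev17) by ring, abs_neg]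
  exact this

lemma trivial_integral17 {F : Type*} [NormedAddCommGroup F] (ν : F → Set ℝ → ℝ) (y : ℝ → F)
    (a L : ℝ) : IsCurveIntegral ν y a a L := by
  intro ε _
  refine ⟨1, one_pos, fun P _ => ?_⟩
  have h1 := P.lt 0 P.k_pos
  have h2 := P.mono17 (i := 0 + 1) (j := P.k) P.k_pos le_rfl
  rw [P.left] at h1
  rw [P.right] at h2
  linarith

lemma refl_sol17 {N : ℕ} {νbar : Fin N → EuclideanSpace ℝ (Fin N) → Set ℝ → ℝ}
    {y₀ : EuclideanSpace ℝ (Fin N)} {S : Set ℝ} {y : ℝ → EuclideanSpace ℝ (Fin N)}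
    (h : IsSolutionOn νbar 0 y₀ S y) :
    IsSolutionOn (fun i y => refl17 (νbar i y)) 0 y₀ (Neg.neg ⁻¹' S) (fun t => y (-t)) := by
  obtain ⟨h0, hy0, hc, hI⟩ := h
  refine ⟨by simpa using h0, by simpa using hy0,
    hc.comp continuous_neg.continuousOn (fun t ht => ht), fun t ht i => ?_⟩
  rcases hI (-t) ht i with ⟨h1, h2⟩ | ⟨h1, h2⟩
  · rcases h1.eq_or_lt with h | h
    · have : t = 0 := by linarith
      subst this
      exact Or.inl ⟨le_rfl, trivial_integral17 _ _ _ _⟩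
    · have := refl_integral17 h2
      rw [neg_neg, neg_zero] at this
      exact Or.inr ⟨by linarith, this⟩
  · have := refl_integral17 h2
    rw [neg_neg, neg_neg, neg_zero] at this
    exact Or.inl ⟨by linarith, this⟩

lemma refl_oc17 {S : Set ℝ} (h : S.OrdConnected) : ((Neg.neg : ℝ → ℝ) ⁻¹' S).OrdConnected := by
  refine ⟨fun x hx y hy z hz => ?_⟩
  exact h.out hy hx ⟨by linarith [hz.2], by linarith [hz.1]⟩

lemma refl_max17 {N : ℕ} {νbar : Fin N → EuclideanSpace ℝ (Fin N) → Set ℝ → ℝ}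
    {y₀ : EuclideanSpace ℝ (Fin N)} {S : Set ℝ} {y : ℝ → EuclideanSpace ℝ (Fin N)}
    (h : IsMaximalSolution νbar 0 y₀ S y) :
    IsMaximalSolution (fun i y => refl17 (νbar i y)) 0 y₀ (Neg.neg ⁻¹' S) (fun t => y (-t)) := by
  obtain ⟨hs, ho, hoc, hm⟩ := h
  refine ⟨refl_sol17 hs, ho.preimage continuous_neg, refl_oc17 hoc, fun S' hS' z hz => ?_⟩
  have h1 := refl_sol17 hz
  simp only [refl_refl17] at h1
  obtain ⟨h2, h3⟩ := hm _ (refl_oc17 hS') _ h1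
  constructor
  · intro t ht
    exact h2 (show - -t ∈ S' by simpa using ht)
  · intro t ht
    have := h3 (show -t ∈ (Neg.neg : ℝ → ℝ) ⁻¹' S' by simpa using ht)
    simpa using this

end Helpers17

theorem stmt17 {N : ℕ}
    (D : Set (EuclideanSpace ℝ (Fin N))) (hDc : D.Countable) (hDd : Dense D)
    (νn : ℕ → Fin N → EuclideanSpace ℝ (Fin N) → Set ℝ → ℝ)
    (νbar : Fin N → EuclideanSpace ℝ (Fin N) → Set ℝ → ℝ)
    (mBn lBn : ℕ → ℕ → Measure ℝ) (mB lB : ℕ → Measure ℝ)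
    (hνn : ∀ n, IsNDimParamBMeasure (νn n) (mBn n) (lBn n))
    (hν : IsNDimParamBMeasure νbar mB lB)
    (hmeq : ∀ j, 1 ≤ j → ∀ ε > (0 : ℝ), ∃ δ > (0 : ℝ), ∀ s t : ℝ,
      0 ≤ t - s → t - s < δ →
        (∀ n, mBn n j (Set.Icc s t) < ENNReal.ofReal ε) ∧
        mB j (Set.Icc s t) < ENNReal.ofReal ε)
    (hlbd : ∀ j, 1 ≤ j → ∃ c > (0 : ℝ), ∀ t : ℝ,
      (∀ n, lBn n j (Set.Icc t (t + 1)) ≤ ENNReal.ofReal c) ∧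
      lB j (Set.Icc t (t + 1)) ≤ ENNReal.ofReal c)
    (hconv : ∀ i : Fin N, ∀ y ∈ D, ∀ q₁ q₂ : ℚ, q₁ < q₂ →
      Tendsto (fun n => νn n i y (Set.Icc (q₁ : ℝ) (q₂ : ℝ))) atTop
        (𝓝 (νbar i y (Set.Icc (q₁ : ℝ) (q₂ : ℝ)))))
    (y₀n : ℕ → EuclideanSpace ℝ (Fin N)) (y₀ : EuclideanSpace ℝ (Fin N))
    (hy₀ : Tendsto y₀n atTop (𝓝 y₀))
    (Sn : ℕ → Set ℝ) (yn : ℕ → ℝ → EuclideanSpace ℝ (Fin N))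
    (hyn : ∀ n, IsMaximalSolution (νn n) 0 (y₀n n) (Sn n) (yn n))
    (S : Set ℝ) (y : ℝ → EuclideanSpace ℝ (Fin N))
    (hy : IsMaximalSolution νbar 0 y₀ S y) :
    ∀ a b : ℝ, a ≤ b → Set.Icc a b ⊆ S → ∀ ε > (0 : ℝ), ∃ n₀ : ℕ, ∀ n ≥ n₀,
      Set.Icc a b ⊆ Sn n ∧ ∀ t ∈ Set.Icc a b, ‖yn n t - y t‖ < ε := by

  intro a b hab hS ε hε
  have hS0 : (0 : ℝ) ∈ S := hy.1.1
  have hoc := hy.2.2.1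
  have sub1 : Icc 0 (max b 0) ⊆ S := by
    apply hoc.out hS0
    rcases le_total b 0 with h | h
    · rwa [max_eq_right h]
    · rw [max_eq_left h]; exact hS ⟨hab, le_rfl⟩
  have sub2 : Icc 0 (max (-a) 0) ⊆ (Neg.neg : ℝ → ℝ) ⁻¹' S := by
    apply (refl_oc17 hoc).out (by simpa using hS0)
    rcases le_total (-a) 0 with h | h
    · rw [max_eq_right h]; simpa using hS0
    · rw [max_eq_left h]
      have : a ∈ S := hS ⟨le_rfl, hab⟩
      simpa using this
  obtain ⟨n₁, H₁⟩ := forward17 D hDd νn νbar mBn lBn mB lB hνn hν hmeq hlbd hconv y₀n y₀ hy₀ Sn yn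
    hyn S y hy (max b 0) (le_max_right _ _) sub1 ε hε
  obtain ⟨n₂, H₂⟩ := forward17 D hDd (fun n i y => refl17 (νn n i y)) (fun i y => refl17 (νbar i y))
    (fun n j => (mBn n j).map Neg.neg) (fun n j => (lBn n j).map Neg.neg)
    (fun j => (mB j).map Neg.neg) (fun j => (lB j).map Neg.neg)
    (fun n => refl_ndim17 (hνn n)) (refl_ndim17 hν)
    (by
      intro j hj ε hε
      obtain ⟨δ, hδ, H⟩ := hmeq j hj ε hε
      refine ⟨δ, hδ, fun s t h1 h2 => ?_⟩
      simp only [Measure.map_apply measurable_neg measurableSet_Icc, preimage_Icc17]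
      exact H (-t) (-s) (by linarith) (by linarith))
    (by
      intro j hj
      obtain ⟨c, hc, H⟩ := hlbd j hj
      refine ⟨c, hc, fun t => ?_⟩
      simp only [Measure.map_apply measurable_neg measurableSet_Icc, preimage_Icc17]
      have := H (-(t + 1))
      rwa [show -(t + 1) + 1 = -t by ring] at this)
    (by
      intro i y hyD q₁ q₂ hq
      simp only [refl_Icc17]
      have := (hconv i y hyD (-q₂) (-q₁) (by linarith)).neg
      push_cast at this
      exact this)
    y₀n y₀ hy₀ (fun n => Neg.neg ⁻¹' Sn n) (fun n t => yn n (-t)) (fun n => refl_max17 (hyn n))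
    (Neg.neg ⁻¹' S) (fun t => y (-t)) (refl_max17 hy) (max (-a) 0) (le_max_right _ _) sub2 ε hε
  refine ⟨max n₁ n₂, fun n hn => ?_⟩
  obtain ⟨A₁, B₁⟩ := H₁ n ((le_max_left _ _).trans hn)
  obtain ⟨A₂, B₂⟩ := H₂ n ((le_max_right _ _).trans hn)
  have key : ∀ t ∈ Icc a b, t ∈ Sn n ∧ ‖yn n t - y t‖ < ε := by
    intro t ht
    rcases le_total 0 t with h | h
    · have hm : t ∈ Icc 0 (max b 0) := ⟨h, ht.2.trans (le_max_left _ _)⟩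
      exact ⟨A₁ hm, B₁ t hm⟩
    · have hm : -t ∈ Icc 0 (max (-a) 0) :=
        ⟨by linarith, le_trans (by linarith [ht.1]) (le_max_left _ _)⟩
      have h1 := A₂ hm
      have h2 := B₂ (-t) hm
      simp only [neg_neg] at h2
      exact ⟨by simpa using h1, h2⟩
  exact ⟨fun t ht => (key t ht).1, fun t ht => (key t ht).2⟩
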